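/- For every integer m ≥ 3, the splitting field of f_m(X) over F_2 has exactly 2^{m+2} elements, i.e., the splitting field of f_m over F_2 is the finite field with 2^{m+2} elements. -/

import Mathlib

open Polynomial

/-- `fibSet m` is the set of fibbinary integers below `2^m`: integers in `{0,…,2^m-1}`
whose binary representation has no two consecutive ones. -/
noncomputable def fibSet (m : ℕ) : Finset ℕ :=
  @Finset.filter _ (fun i => ∀ j : ℕ, ¬(i.testBit j ∧ i.testBit (j + 1)))
    (Classical.decPred _) (Finset.range (2 ^ m))

/-- The `m`-th fibbinary polynomial over `F_2`. -/
noncomputable def fibPoly (m : ℕ) : Polynomial (ZMod 2) :=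
  ∑ i ∈ fibSet m, X ^ i

/-!
Sorting the fibbinary integers by their lowest bits gives `f_{m+2} = f_{m+1} ^ 2 + X f_m ^ 4`, and
induction turns this into the high-bit recurrence `f_{m+2} = f_{m+1} + X ^ 2 ^ (m+1) f_m`.
Consecutive `f_m` are coprime, so modulo `f_m` the two recurrences read
`f_{m+1} = f_{m+2} = f_{m+1} ^ 2` with `f_{m+1}` a unit, whence `f_{m+1} = f_{m+2} = 1`; one index
further they read `1 + X ^ 2 ^ (m+2) = f_{m+3} = 1 + X`. Thus `f_m` divides `X ^ 2 ^ (m+2) - X`: it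
is separable and the degree `d` of its splitting field divides `m + 2`. As `f_m` has at least
`2 ^ (m-1)` roots, all of them nonzero, `d ≥ m`, and for `m ≥ 3` the only divisor of `m + 2` that
large is `m + 2` itself.
-/

section FiniteField

variable {F K : Type*} [Field F] [Field K] [Algebra F K] [Finite K]

theorem finrank_dvd_of_adjoin_eq_top {s : Set K} (hs : Algebra.adjoin F s = ⊤) {n : ℕ}
    (h : ∀ x ∈ s, x ^ Nat.card F ^ n = x) : Module.finrank F K ∣ n := by
  have : Finite F := Finite.of_injective _ (algebraMap F K).injective
  have := Fintype.ofFinite F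
  rw [← FiniteField.orderOf_frobeniusAlgHom F K, orderOf_dvd_iff_pow_eq_one]
  refine AlgHom.ext_of_adjoin_eq_top hs fun x hx ↦ ?_
  rw [AlgHom.coe_pow, FiniteField.coe_frobeniusAlgHom, pow_iterate, AlgHom.one_apply,
    ← Nat.card_eq_fintype_card]
  exact h x hx

theorem natDegree_lt_natCard_of_separable {f : F[X]} (hsep : f.Separable)
    (hsplit : (f.map (algebraMap F K)).Splits) (h0 : f.coeff 0 ≠ 0) :
    f.natDegree < Nat.card K := by
  have hzero : (0 : K) ∉ f.rootSet K := fun h ↦ h0 <| by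
    simpa [← coeff_zero_eq_aeval_zero'] using aeval_eq_zero_of_mem_rootSet h
  rw [← card_rootSet_eq_natDegree hsep hsplit, ← Nat.card_eq_fintype_card, Nat.card_coe_set_eq]
  exact Set.ncard_lt_card ((Set.ne_univ_iff_exists_notMem _).2 ⟨0, hzero⟩)

end FiniteField

/-- A natural number is fibbinary if its binary expansion has no two consecutive ones. -/
def IsFibbinary (i : ℕ) : Prop :=
  ∀ j : ℕ, ¬(i.testBit j ∧ i.testBit (j + 1))

theorem isFibbinary_iff_div_two {i : ℕ} :
    IsFibbinary i ↔ ¬(i.testBit 0 ∧ i.testBit 1) ∧ IsFibbinary (i / 2) := by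
  simp only [IsFibbinary, ← Nat.testBit_succ, Nat.succ_eq_add_one]
  exact Nat.and_forall_add_one.symm

theorem isFibbinary_two_mul {i : ℕ} : IsFibbinary (2 * i) ↔ IsFibbinary i := by
  rw [isFibbinary_iff_div_two, Nat.mul_div_cancel_left i two_pos]
  simp [Nat.testBit_zero]

theorem isFibbinary_four_mul_add_one {i : ℕ} : IsFibbinary (4 * i + 1) ↔ IsFibbinary i := by
  rw [isFibbinary_iff_div_two, show (4 * i + 1) / 2 = 2 * i by lia, isFibbinary_two_mul,
    and_iff_right]
  simp only [Nat.testBit_succ, Nat.testBit_zero]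
  grind

theorem not_isFibbinary_four_mul_add_three (i : ℕ) : ¬IsFibbinary (4 * i + 3) := by
  intro h
  apply h 0
  simp only [Nat.testBit_succ, Nat.testBit_zero]
  grind

theorem isFibbinary_zero : IsFibbinary 0 := by
  simp [IsFibbinary]

theorem isFibbinary_one : IsFibbinary 1 :=
  isFibbinary_four_mul_add_one.2 isFibbinary_zero

theorem isFibbinary_two_pow (k : ℕ) : IsFibbinary (2 ^ k) := by
  induction k with
  | zero => exact isFibbinary_one
  | succ k ih => rwa [pow_succ', isFibbinary_two_mul]

theorem mem_fibSet {m i : ℕ} : i ∈ fibSet m ↔ i < 2 ^ m ∧ IsFibbinary i := by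
  simp [fibSet, IsFibbinary]

theorem fibSet_zero : fibSet 0 = {0} := by
  ext i
  rw [mem_fibSet, Finset.mem_singleton, pow_zero, Nat.lt_one_iff]
  exact and_iff_left_of_imp fun h ↦ h ▸ isFibbinary_zero

theorem fibSet_one : fibSet 1 = {0, 1} := by
  ext i
  rw [mem_fibSet, Finset.mem_insert, Finset.mem_singleton, pow_one, Nat.lt_succ_iff,
    Nat.le_one_iff_eq_zero_or_eq_one]
  refine and_iff_left_of_imp ?_
  rintro (rfl | rfl)
  exacts [isFibbinary_zero, isFibbinary_one]

theorem fibSet_add_two (m : ℕ) :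
    fibSet (m + 2) = (fibSet (m + 1)).image (2 * ·) ∪ (fibSet m).image (4 * · + 1) := by
  ext i
  simp only [Finset.mem_union, Finset.mem_image, mem_fibSet, pow_succ]
  constructor
  · rintro ⟨hlt, hi⟩
    obtain ⟨k, rfl | rfl | rfl⟩ : ∃ k, i = 2 * k ∨ i = 4 * k + 1 ∨ i = 4 * k + 3 := by
      obtain h | h | h : i % 2 = 0 ∨ i % 4 = 1 ∨ i % 4 = 3 := by lia
      exacts [⟨i / 2, by lia⟩, ⟨i / 4, by lia⟩, ⟨i / 4, by lia⟩]
    · exact Or.inl ⟨k, ⟨by lia, isFibbinary_two_mul.1 hi⟩, rfl⟩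
    · exact Or.inr ⟨k, ⟨by lia, isFibbinary_four_mul_add_one.1 hi⟩, rfl⟩
    · exact absurd hi (not_isFibbinary_four_mul_add_three k)
  · rintro (⟨k, ⟨hlt, hk⟩, rfl⟩ | ⟨k, ⟨hlt, hk⟩, rfl⟩)
    · exact ⟨by lia, isFibbinary_two_mul.2 hk⟩
    · exact ⟨by lia, isFibbinary_four_mul_add_one.2 hk⟩

theorem fibPoly_zero : fibPoly 0 = 1 := by
  simp [fibPoly, fibSet_zero]

theorem fibPoly_one : fibPoly 1 = 1 + X := by
  simp [fibPoly, fibSet_one]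

theorem coeff_fibPoly_of_mem {m i : ℕ} (hi : i ∈ fibSet m) : (fibPoly m).coeff i = 1 := by
  simp [fibPoly, coeff_X_pow, hi]

theorem coeff_zero_fibPoly (m : ℕ) : (fibPoly m).coeff 0 = 1 :=
  coeff_fibPoly_of_mem (mem_fibSet.2 ⟨Nat.two_pow_pos m, isFibbinary_zero⟩)

theorem two_pow_le_natDegree_fibPoly_add_one (m : ℕ) : 2 ^ m ≤ (fibPoly (m + 1)).natDegree := by
  have hmem : 2 ^ m ∈ fibSet (m + 1) :=
    mem_fibSet.2 ⟨Nat.pow_lt_pow_succ one_lt_two, isFibbinary_two_pow m⟩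
  exact le_natDegree_of_ne_zero (coeff_fibPoly_of_mem hmem ▸ one_ne_zero)

theorem fibPoly_add_two_eq_sq_add (m : ℕ) :
    fibPoly (m + 2) = fibPoly (m + 1) ^ 2 + X * fibPoly m ^ 4 := by
  have hdisj : Disjoint ((fibSet (m + 1)).image (2 * ·)) ((fibSet m).image (4 * · + 1)) := by
    simp only [Finset.disjoint_left, Finset.mem_image]
    lia
  have hsq : fibPoly (m + 1) ^ 2 = ∑ i ∈ fibSet (m + 1), X ^ (2 * i) := by
    simp only [fibPoly, sum_pow_char, pow_mul']
  have hfour : fibPoly m ^ 4 = ∑ i ∈ fibSet m, X ^ (4 * i) := by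
    simp only [fibPoly, show 4 = 2 ^ 2 by rfl, sum_pow_char_pow, pow_mul']
  rw [hsq, hfour, fibPoly, fibSet_add_two, Finset.sum_union hdisj, Finset.mul_sum,
    Finset.sum_image (by intro a; grind), Finset.sum_image (by intro a; grind)]
  simp only [pow_succ']

theorem fibPoly_add_two_eq_add_mul (m : ℕ) :
    fibPoly (m + 2) = fibPoly (m + 1) + X ^ 2 ^ (m + 1) * fibPoly m := by
  induction m using Nat.twoStepInduction with
  | zero =>
    simp only [fibPoly_add_two_eq_sq_add, zero_add, fibPoly_zero, fibPoly_one, CharTwo.add_sq]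
    ring
  | one =>
    have h4 : ((1 : (ZMod 2)[X]) + X) ^ 4 = 1 + X ^ 4 := by
      rw [show 4 = 2 ^ 2 by rfl, add_pow_char_pow, one_pow]
    simp only [fibPoly_add_two_eq_sq_add, Nat.reduceAdd, zero_add, fibPoly_zero, fibPoly_one,
      CharTwo.add_sq, h4]
    ring
  | more m ih₀ ih₁ =>
    have hsq : fibPoly (m + 3) ^ 2 =
        fibPoly (m + 2) ^ 2 + X ^ 2 ^ (m + 3) * fibPoly (m + 1) ^ 2 := by
      rw [ih₁, CharTwo.add_sq]
      ring
    have hfour : fibPoly (m + 2) ^ 4 =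
        fibPoly (m + 1) ^ 4 + X ^ 2 ^ (m + 3) * fibPoly m ^ 4 := by
      rw [ih₀, show 4 = 2 ^ 2 by rfl, add_pow_char_pow]
      ring
    calc fibPoly (m + 4) = fibPoly (m + 3) ^ 2 + X * fibPoly (m + 2) ^ 4 :=
          fibPoly_add_two_eq_sq_add (m + 2)
      _ = (fibPoly (m + 2) ^ 2 + X * fibPoly (m + 1) ^ 4) +
            X ^ 2 ^ (m + 3) * (fibPoly (m + 1) ^ 2 + X * fibPoly m ^ 4) := by
          rw [hsq, hfour]
          ring
      _ = fibPoly (m + 3) + X ^ 2 ^ (m + 3) * fibPoly (m + 2) := by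
          rw [← fibPoly_add_two_eq_sq_add m, ← fibPoly_add_two_eq_sq_add (m + 1)]

theorem isCoprime_fibPoly_X (m : ℕ) : IsCoprime (fibPoly m) X := by
  rw [← divX_mul_X_add (fibPoly m), coeff_zero_fibPoly, C_1]
  exact isCoprime_one_left.mul_add_right_left _

theorem isCoprime_fibPoly_add_one (m : ℕ) : IsCoprime (fibPoly m) (fibPoly (m + 1)) := by
  induction m with
  | zero =>
    rw [fibPoly_zero]
    exact isCoprime_one_left
  | succ m ih =>
    rw [fibPoly_add_two_eq_sq_add, sq]
    exact ((isCoprime_fibPoly_X (m + 1)).mul_right ih.symm.pow_right).mul_add_left_right _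

section Root

variable {A : Type*} [CommRing A] [Algebra (ZMod 2) A] {m : ℕ} {x : A}

theorem aeval_fibPoly_add_one_eq_one (hx : aeval x (fibPoly m) = 0) :
    aeval x (fibPoly (m + 1)) = 1 := by
  have hcop : IsCoprime (aeval x (fibPoly m)) (aeval x (fibPoly (m + 1))) :=
    (isCoprime_fibPoly_add_one m).map (aeval x).toRingHom
  have hunit : IsUnit (aeval x (fibPoly (m + 1))) := by
    rwa [hx, isCoprime_zero_left] at hcop
  have hhigh : aeval x (fibPoly (m + 2)) = aeval x (fibPoly (m + 1)) := by
    simp [fibPoly_add_two_eq_add_mul, hx]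
  have hlow : aeval x (fibPoly (m + 2)) = aeval x (fibPoly (m + 1)) ^ 2 := by
    simp [fibPoly_add_two_eq_sq_add, hx]
  refine (IsIdempotentElem.iff_eq_one_of_isUnit hunit).1 ?_
  rw [IsIdempotentElem, ← sq, ← hlow, hhigh]

theorem aeval_fibPoly_add_two_eq_one (hx : aeval x (fibPoly m) = 0) :
    aeval x (fibPoly (m + 2)) = 1 := by
  simp [fibPoly_add_two_eq_sq_add, hx, aeval_fibPoly_add_one_eq_one hx]

theorem pow_two_pow_eq_self_of_aeval_fibPoly_eq_zero (hx : aeval x (fibPoly m) = 0) :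
    x ^ 2 ^ (m + 2) = x := by
  have h₁ := aeval_fibPoly_add_one_eq_one hx
  have h₂ := aeval_fibPoly_add_two_eq_one hx
  have hhigh : aeval x (fibPoly (m + 3)) = 1 + x ^ 2 ^ (m + 2) := by
    simp [fibPoly_add_two_eq_add_mul (m + 1), h₁, h₂]
  have hlow : aeval x (fibPoly (m + 3)) = 1 + x := by
    simp [fibPoly_add_two_eq_sq_add (m + 1), h₁, h₂]
  exact add_left_cancel (hhigh.symm.trans hlow)

end Root

theorem fibPoly_dvd_X_pow_two_pow_sub_X (m : ℕ) : fibPoly m ∣ X ^ 2 ^ (m + 2) - X := by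
  rw [← AdjoinRoot.mk_eq_zero, map_sub, map_pow, AdjoinRoot.mk_X, sub_eq_zero]
  apply pow_two_pow_eq_self_of_aeval_fibPoly_eq_zero
  rw [AdjoinRoot.aeval_eq, AdjoinRoot.mk_self]

theorem separable_fibPoly (m : ℕ) : (fibPoly m).Separable :=
  (galois_poly_separable 2 _ (dvd_pow_self 2 (Nat.succ_ne_zero _))).of_dvd
    (fibPoly_dvd_X_pow_two_pow_sub_X m)

theorem finrank_splittingField_fibPoly_dvd (m : ℕ) :
    Module.finrank (ZMod 2) (fibPoly m).SplittingField ∣ m + 2 := by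
  have : Finite (fibPoly m).SplittingField := Module.finite_of_finite (ZMod 2)
  refine finrank_dvd_of_adjoin_eq_top (SplittingField.adjoin_rootSet (fibPoly m)) fun x hx ↦ ?_
  rw [Nat.card_zmod]
  exact pow_two_pow_eq_self_of_aeval_fibPoly_eq_zero (aeval_eq_zero_of_mem_rootSet hx)

theorem card_splittingField_fibPoly (m : ℕ) (hm : 3 ≤ m) :
    Nat.card (fibPoly m).SplittingField = 2 ^ (m + 2) := by
  set K := (fibPoly m).SplittingField
  set d := Module.finrank (ZMod 2) K
  have : Finite K := Module.finite_of_finite (ZMod 2)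
  have hcard : Nat.card K = 2 ^ d := by
    rw [Module.natCard_eq_pow_finrank (K := ZMod 2), Nat.card_zmod]
  have hlt : 2 ^ (m - 1) < 2 ^ d :=
    calc 2 ^ (m - 1) ≤ (fibPoly m).natDegree := by
          simpa only [Nat.sub_add_cancel (show 1 ≤ m by lia)] using
            two_pow_le_natDegree_fibPoly_add_one (m - 1)
      _ < Nat.card K := natDegree_lt_natCard_of_separable (separable_fibPoly m)
          (SplittingField.splits _) (coeff_zero_fibPoly m ▸ one_ne_zero)
      _ = 2 ^ d := hcard
  have hd : m - 1 < d := (Nat.pow_lt_pow_iff_right one_lt_two).1 hlt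
  have hdvd : d ∣ m + 2 := finrank_splittingField_fibPoly_dvd m
  rw [hcard, Nat.eq_of_dvd_of_lt_two_mul (by lia) hdvd (by lia)]
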